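/- In the degree-three game G constructed from an X3C instance, let 0 ≤ δ < 1 and let 𝒱 be a payment promise with 𝒳⋆_{G[𝒱]} ⊆ ∏_{i∈N} O_i and cost(𝒱) ≤ δ. Then for every set player C_j ∈ 𝒞, the set of undominated strategies of C_j in G[𝒱] is either {T_{C_j}} or {F_{C_j}}, i.e., it is a singleton. -/

import Mathlib

/-!
In a finite game every strategy is weakly dominated by an undominated one. So if a player has only
one undominated strategy in `G[V]`, then in an undominated profile that player must be paid at
least what deviating would gain in `G`, and this payment is bounded by the cost. An element player
gains `1` by deviating to `F` unless exactly one of the (at most three) sets containing the element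
plays `T`. As the cost is below `1`, exactly one of them plays `T` in every undominated profile.
If both strategies of a set player were undominated, switching between them would stay inside the
undominated profiles but change this number for every element of the set.
-/

/-- In a game with player set `ι` and strategy sets `S i`, strategy `x` of player `i`
(weakly) dominates strategy `y`: `x` is at least as good against every profile of the
other players' strategies and strictly better against at least one. -/
def Dominates {ι : Type*} [DecidableEq ι] {S : ι → Type*}
    (U : ι → (∀ j, S j) → ℝ) (i : ι) (x y : S i) : Prop :=
  (∀ σ : ∀ j, S j, U i (Function.update σ i y) ≤ U i (Function.update σ i x)) ∧
  (∃ σ : ∀ j, S j, U i (Function.update σ i y) < U i (Function.update σ i x))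

/-- A strategy of player `i` is undominated if no strategy of player `i` dominates it. -/
def Undominated {ι : Type*} [DecidableEq ι] {S : ι → Type*}
    (U : ι → (∀ j, S j) → ℝ) (i : ι) (x : S i) : Prop :=
  ¬ ∃ y : S i, Dominates U i y x

/-- The set `𝒳⋆` of strategy profiles consisting entirely of undominated strategies. -/
def UndomProfiles {ι : Type*} [DecidableEq ι] {S : ι → Type*}
    (U : ι → (∀ j, S j) → ℝ) : Set (∀ j, S j) :=
  {σ | ∀ i, Undominated U i (σ i)}

/-- The cost of a payment promise `V` for the game with utilities `U`:
the maximum, over undominated profiles of the modified game `G[V]`,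
of the total payment. -/
noncomputable def gameCost {ι : Type*} [DecidableEq ι] [Fintype ι] {S : ι → Type*}
    (U V : ι → (∀ j, S j) → ℝ) : ℝ :=
  sSup ((fun σ => ∑ i, V i σ) '' UndomProfiles (fun i σ => U i σ + V i σ))

/-- The rectangular strategy-profile region `O_1 × ⋯ × O_n`. -/
def rectSet {ι : Type*} {S : ι → Type*} (O : ∀ i, Set (S i)) : Set (∀ j, S j) :=
  {σ | ∀ i, σ i ∈ O i}

/-- `S` is an exact cover of the X3C instance with `3 * nh` elements (indexed by
`ZMod m`, `m = 3 * nh`) and sets `C`: `|S| = nh` and every element is covered. -/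
def IsExactCover (m nh : ℕ) (C : ZMod m → Finset (ZMod m)) (S : Set (ZMod m)) : Prop :=
  S.ncard = nh ∧ ∀ a : ZMod m, ∃ j ∈ S, a ∈ C j

/-- The utilities of the degree-three graphical game: players are elements (left) and
sets (right), every player plays a Boolean (`true` = the `T`-strategy). An element
player `a` receives 1 iff it plays its `F`-strategy and the number of sets containing
`a` that play their `T`-strategy is 0, 2 or 3; set players always receive 0. -/
def dGame (m : ℕ) [NeZero m] (C : ZMod m → Finset (ZMod m)) :
    (ZMod m ⊕ ZMod m) → ((ZMod m ⊕ ZMod m) → Bool) → ℝ :=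
  fun p σ =>
    match p with
    | Sum.inl a =>
        if σ (Sum.inl a) = false ∧
            ((Finset.univ.filter fun j => a ∈ C j ∧ σ (Sum.inr j) = true).card = 0 ∨
             (Finset.univ.filter fun j => a ∈ C j ∧ σ (Sum.inr j) = true).card = 2 ∨
             (Finset.univ.filter fun j => a ∈ C j ∧ σ (Sum.inr j) = true).card = 3)
        then 1 else 0
    | Sum.inr _ => 0

/-- The desired strategy sets: `O_{a_i} = {T_{a_i}}` for element players and
`O_{C_j} = {T_{C_j}, F_{C_j}}` for set players. -/
def dDesired (m : ℕ) : (ZMod m ⊕ ZMod m) → Set Bool :=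
  fun p => match p with
  | Sum.inl _ => {true}
  | Sum.inr _ => Set.univ

section Games

variable {ι : Type*} [DecidableEq ι] {S : ι → Type*}

/-- The payoff vector of a strategy `x` of player `i`, indexed by full profiles whose `i`-th entry
is overwritten by `x`. It turns dominance into the strict pointwise order on functions. -/
def payoffVector (U : ι → (∀ j, S j) → ℝ) (i : ι) (x : S i) : (∀ j, S j) → ℝ :=
  fun σ => U i (Function.update σ i x)

lemma dominates_iff_payoffVector_lt {U : ι → (∀ j, S j) → ℝ} {i : ι} {x y : S i} :
    Dominates U i x y ↔ payoffVector U i y < payoffVector U i x :=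
  Pi.lt_def.symm

lemma exists_undominated_payoffVector_le (U : ι → (∀ j, S j) → ℝ) (i : ι) [Finite (S i)]
    (y : S i) : ∃ x, Undominated U i x ∧ payoffVector U i y ≤ payoffVector U i x := by
  obtain ⟨_, hle, ⟨x, rfl⟩, hmax⟩ :=
    (Set.finite_range (payoffVector U i)).exists_le_maximal (Set.mem_range_self y)
  refine ⟨x, ?_, hle⟩
  rintro ⟨z, hz⟩
  have hlt := dominates_iff_payoffVector_lt.mp hz
  exact hlt.not_ge (hmax (Set.mem_range_self z) hlt.le)

lemma exists_undominated (U : ι → (∀ j, S j) → ℝ) (i : ι) [Finite (S i)] [Nonempty (S i)] :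
    ∃ x, Undominated U i x :=
  (exists_undominated_payoffVector_le U i (Classical.arbitrary (S i))).imp fun _ => And.left

lemma undomProfiles_nonempty (U : ι → (∀ j, S j) → ℝ) [∀ i, Finite (S i)]
    [∀ i, Nonempty (S i)] : (UndomProfiles U).Nonempty :=
  Classical.skolem.mp fun i => exists_undominated U i

lemma update_mem_undomProfiles {U : ι → (∀ j, S j) → ℝ} {σ : ∀ j, S j}
    (hσ : σ ∈ UndomProfiles U) {i : ι} {x : S i} (hx : Undominated U i x) :
    Function.update σ i x ∈ UndomProfiles U :=
  (Function.forall_update_iff σ fun k y => Undominated U k y).mpr ⟨hx, fun k _ => hσ k⟩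

lemma mem_of_undominated {U : ι → (∀ j, S j) → ℝ} {O : ∀ i, Set (S i)}
    (hO : UndomProfiles U ⊆ rectSet O) {σ : ∀ j, S j} (hσ : σ ∈ UndomProfiles U) {i : ι}
    {x : S i} (hx : Undominated U i x) : x ∈ O i := by
  simpa only [Function.update_self] using hO (update_mem_undomProfiles hσ hx) i

variable [Fintype ι] [∀ i, Finite (S i)] {U V : ι → (∀ j, S j) → ℝ}

lemma payment_le_gameCost (hV : ∀ i σ, 0 ≤ V i σ) {σ : ∀ j, S j}
    (hσ : σ ∈ UndomProfiles fun i σ => U i σ + V i σ) (i : ι) : V i σ ≤ gameCost U V :=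
  calc
    V i σ ≤ ∑ k, V k σ := Finset.single_le_sum (fun k _ => hV k σ) (Finset.mem_univ i)
    _ ≤ gameCost U V := le_csSup (Set.toFinite _).bddAbove ⟨σ, hσ, rfl⟩

lemma utility_update_le_add_gameCost (hV : ∀ i σ, 0 ≤ V i σ) {O : ∀ i, Set (S i)}
    (hO : UndomProfiles (fun i σ => U i σ + V i σ) ⊆ rectSet O) {i : ι}
    (hOi : (O i).Subsingleton) {σ : ∀ j, S j}
    (hσ : σ ∈ UndomProfiles fun i σ => U i σ + V i σ) (y : S i) :
    U i (Function.update σ i y) ≤ U i σ + gameCost U V := by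
  obtain ⟨x, hx, hyx⟩ := exists_undominated_payoffVector_le (fun i σ => U i σ + V i σ) i y
  obtain rfl : x = σ i := hOi (mem_of_undominated hO hσ hx) (hO hσ i)
  calc
    U i (Function.update σ i y)
      ≤ U i (Function.update σ i y) + V i (Function.update σ i y) :=
        le_add_of_nonneg_right (hV i _)
    _ ≤ U i σ + V i σ := by simpa only [payoffVector, Function.update_eq_self] using hyx σ
    _ ≤ U i σ + gameCost U V := by gcongr; exact payment_le_gameCost hV hσ i

end Games

section DegreeThreeGame

variable {m : ℕ} [NeZero m] {C : ZMod m → Finset (ZMod m)}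

/-- The (indices of) sets containing the element `a` that play their `T`-strategy in the profile
`σ`; the utility of the element player `a` depends only on their number and on its own strategy. -/
def chosenSets (C : ZMod m → Finset (ZMod m)) (σ : (ZMod m ⊕ ZMod m) → Bool) (a : ZMod m) :
    Finset (ZMod m) :=
  Finset.univ.filter fun j => a ∈ C j ∧ σ (Sum.inr j) = true

lemma card_chosenSets_le_ncard (σ : (ZMod m ⊕ ZMod m) → Bool) (a : ZMod m) :
    (chosenSets C σ a).card ≤ {j | a ∈ C j}.ncard := by
  rw [← Set.ncard_coe_finset]
  refine Set.ncard_le_ncard fun j hj => ?_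
  exact (Finset.mem_filter.mp hj).2.1

lemma chosenSets_update_true (σ : (ZMod m ⊕ ZMod m) → Bool) {a j : ZMod m} (ha : a ∈ C j) :
    chosenSets C (Function.update σ (Sum.inr j) true) a = insert j (chosenSets C σ a) := by
  ext k
  by_cases hk : k = j <;> simp [chosenSets, hk, ha]

lemma chosenSets_update_false (σ : (ZMod m ⊕ ZMod m) → Bool) (a j : ZMod m) :
    chosenSets C (Function.update σ (Sum.inr j) false) a = (chosenSets C σ a).erase j := by
  ext k
  by_cases hk : k = j <;> simp [chosenSets, hk]

lemma dGame_inl_eq_zero {σ : (ZMod m ⊕ ZMod m) → Bool} {a : ZMod m}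
    (ha : σ (Sum.inl a) = true) : dGame m C (Sum.inl a) σ = 0 := by
  simp [dGame, ha]

lemma dGame_inl_update_false (σ : (ZMod m ⊕ ZMod m) → Bool) (a : ZMod m) :
    dGame m C (Sum.inl a) (Function.update σ (Sum.inl a) false) =
      if (chosenSets C σ a).card ∈ ({0, 2, 3} : Set ℕ) then 1 else 0 := by
  simp [dGame, chosenSets]

variable {V : (ZMod m ⊕ ZMod m) → ((ZMod m ⊕ ZMod m) → Bool) → ℝ}

lemma card_chosenSets_eq_one (hV : ∀ p σ, 0 ≤ V p σ)
    (himpl : UndomProfiles (fun p σ => dGame m C p σ + V p σ) ⊆ rectSet (dDesired m))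
    (hcost : gameCost (dGame m C) V < 1) {σ : (ZMod m ⊕ ZMod m) → Bool}
    (hσ : σ ∈ UndomProfiles (fun p σ => dGame m C p σ + V p σ)) {a : ZMod m}
    (hocc : {j | a ∈ C j}.ncard ≤ 3) : (chosenSets C σ a).card = 1 := by
  have hcard : (chosenSets C σ a).card ≤ 3 := (card_chosenSets_le_ncard σ a).trans hocc
  have hσa : σ (Sum.inl a) = true := himpl hσ (Sum.inl a)
  have hgain : dGame m C (Sum.inl a) (Function.update σ (Sum.inl a) false) < 1 :=
    calc
      _ ≤ dGame m C (Sum.inl a) σ + gameCost (dGame m C) V :=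
        utility_update_le_add_gameCost hV himpl Set.subsingleton_singleton hσ false
      _ < 1 := by rwa [dGame_inl_eq_zero hσa, zero_add]
  by_contra hne
  have hmem : (chosenSets C σ a).card ∈ ({0, 2, 3} : Set ℕ) := by
    simp only [Set.mem_insert_iff, Set.mem_singleton_iff]
    omega
  rw [dGame_inl_update_false, if_pos hmem] at hgain
  exact lt_irrefl _ hgain

lemma not_undominated_true_and_false (hV : ∀ p σ, 0 ≤ V p σ)
    (himpl : UndomProfiles (fun p σ => dGame m C p σ + V p σ) ⊆ rectSet (dDesired m))
    (hcost : gameCost (dGame m C) V < 1) {a j : ZMod m} (ha : a ∈ C j)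
    (hocc : {k | a ∈ C k}.ncard ≤ 3) :
    ¬ (Undominated (fun p σ => dGame m C p σ + V p σ) (Sum.inr j) true ∧
      Undominated (fun p σ => dGame m C p σ + V p σ) (Sum.inr j) false) := by
  rintro ⟨hT, hF⟩
  obtain ⟨σ, hσ⟩ := undomProfiles_nonempty fun p σ => dGame m C p σ + V p σ
  have hinsert : (insert j (chosenSets C σ a)).card = 1 := by
    rw [← chosenSets_update_true σ ha]
    exact card_chosenSets_eq_one hV himpl hcost (update_mem_undomProfiles hσ hT) hocc
  have herase : ((chosenSets C σ a).erase j).card = 1 := by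
    rw [← chosenSets_update_false σ a j]
    exact card_chosenSets_eq_one hV himpl hcost (update_mem_undomProfiles hσ hF) hocc
  have hlt : ((chosenSets C σ a).erase j).card < (insert j (chosenSets C σ a)).card := by
    rw [← Finset.erase_insert_eq_erase]
    exact Finset.card_erase_lt_of_mem (Finset.mem_insert_self j _)
  omega

end DegreeThreeGame

theorem deg3_claim2_general {m : ℕ} [NeZero m] {C : ZMod m → Finset (ZMod m)}
    {V : (ZMod m ⊕ ZMod m) → ((ZMod m ⊕ ZMod m) → Bool) → ℝ} (hV : ∀ p σ, 0 ≤ V p σ)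
    (himpl : UndomProfiles (fun p σ => dGame m C p σ + V p σ) ⊆ rectSet (dDesired m))
    (hcost : gameCost (dGame m C) V < 1) {a j : ZMod m} (ha : a ∈ C j)
    (hocc : {k | a ∈ C k}.ncard ≤ 3) :
    {b : Bool | Undominated (fun p σ => dGame m C p σ + V p σ) (Sum.inr j) b} = {true} ∨
      {b : Bool | Undominated (fun p σ => dGame m C p σ + V p σ) (Sum.inr j) b} = {false} := by
  have hboth := not_undominated_true_and_false hV himpl hcost ha hocc
  obtain ⟨b, hb⟩ := exists_undominated (fun p σ => dGame m C p σ + V p σ) (Sum.inr j)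
  cases b with
  | false =>
    exact .inr <| Set.ext <| Bool.forall_bool.mpr
      ⟨iff_of_true hb rfl, iff_of_false (fun hT => hboth ⟨hT, hb⟩) Bool.noConfusion⟩
  | true =>
    exact .inl <| Set.ext <| Bool.forall_bool.mpr
      ⟨iff_of_false (fun hF => hboth ⟨hb, hF⟩) Bool.noConfusion, iff_of_true hb rfl⟩

/-- with `0 ≤ δ < 1` and a payment promise implementing the desired
region of the degree-three game with cost at most `δ`, every set player has exactly one
undominated strategy: either its `T`-strategy or its `F`-strategy. -/
theorem deg3_claim2 (m nh : ℕ) [NeZero m] (hm : m = 3 * nh)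
    (C : ZMod m → Finset (ZMod m))
    (hC : ∀ j : ZMod m, (C j).card = 3)
    (hocc : ∀ a : ZMod m, Set.ncard {j : ZMod m | a ∈ C j} = 3)
    (δ : ℝ) (hδ0 : 0 ≤ δ) (hδ1 : δ < 1)
    (V : (ZMod m ⊕ ZMod m) → ((ZMod m ⊕ ZMod m) → Bool) → ℝ)
    (hV : ∀ p σ, 0 ≤ V p σ)
    (himpl : UndomProfiles (fun p σ => dGame m C p σ + V p σ) ⊆ rectSet (dDesired m))
    (hcost : gameCost (dGame m C) V ≤ δ) :
    ∀ j : ZMod m,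
      {b : Bool | Undominated (fun p σ => dGame m C p σ + V p σ) (Sum.inr j) b} =
          {true} ∨
        {b : Bool | Undominated (fun p σ => dGame m C p σ + V p σ) (Sum.inr j) b} =
          {false} := by
  intro j
  obtain ⟨a, ha⟩ : (C j).Nonempty := Finset.card_pos.mp (by rw [hC j]; norm_num)
  exact deg3_claim2_general hV himpl (hcost.trans_lt hδ1) ha (hocc a).le
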